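/- arXiv:2307.02644 — 2 statements merged into one kernel-verified Lean document; each statement's English description precedes it below -/
import Mathlib

section
/- Let n ≥ 1 and let P_1, P_2 ∈ 𝒫_n(𝒳) be types with type classes U_{P_1}^n and U_{P_2}^n. Then: (i) for all x, x' ∈ U_{P_1}^n, |{ y ∈ U_{P_2}^n : x ∼ y in G_s^n }| = |{ y ∈ U_{P_2}^n : x' ∼ y in G_s^n }|; and (ii) for any x_0 ∈ U_{P_1}^n and y_0 ∈ U_{P_2}^n, |{ y ∈ U_{P_2}^n : x_0 ∼ y in G_s^n }| · |U_{P_1}^n| = |{ x ∈ U_{P_1}^n : y_0 ∼ x in G_s^n }| · |U_{P_2}^n|. -/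
/-!
The symmetric group on the `n` coordinates acts on sequences by `x ↦ x ∘ σ`. It acts transitively
on each type class, preserves every type class, and preserves adjacency in the sender graph, since
the block utility is a sum over coordinates. A permutation carrying `x` to `x'` therefore gives a
bijection between the neighbours of `x` and those of `x'` in any other type class, which is
the first claim (`card_nbrs_eq`). The bipartite graph between two type classes is thus
regular on each side, and counting its edges from both sides gives the second claim.
-/

open Finset Filter
open scoped Classical

noncomputable section

/-- The `n`-block average utility `𝒰_n(x̂,x) = (1/n) ∑ᵢ 𝒰(x̂ᵢ,xᵢ)`. -/
def blockUtil {q : ℕ} (U : Fin q → Fin q → ℝ) (n : ℕ) (xhat x : Fin n → Fin q) : ℝ :=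
  (∑ i, U (xhat i) (x i)) / n

/-- Mean Hamming distortion `d_n(x̂,x) = (1/n)|{k : x̂ₖ ≠ xₖ}|`. -/
def hamDist {q : ℕ} (n : ℕ) (xhat x : Fin n → Fin q) : ℝ :=
  ((Finset.univ.filter fun k => xhat k ≠ x k).card : ℝ) / n

/-- Probability of a sequence under the i.i.d. source with marginal `P`. -/
def seqProb {q : ℕ} (P : Fin q → ℝ) (n : ℕ) (x : Fin n → Fin q) : ℝ :=
  ∏ i, P (x i)

/-- The sender's best responses `ℬ(g)` to the receiver strategy `g`. -/
def BestResponse {q : ℕ} (U : Fin q → Fin q → ℝ) (n : ℕ)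
    (g : (Fin n → Fin q) → (Fin n → Fin q)) :
    Set ((Fin n → Fin q) → (Fin n → Fin q)) :=
  {s | ∀ (x : Fin n → Fin q) (s' : (Fin n → Fin q) → (Fin n → Fin q)),
      blockUtil U n (g (s' x)) x ≤ blockUtil U n (g (s x)) x}

/-- The set `𝒟_d(g,s)` of sequences recovered within distortion `d`. -/
def recSet {q : ℕ} (n : ℕ) (d : ℝ) (g s : (Fin n → Fin q) → (Fin n → Fin q)) :
    Finset (Fin n → Fin q) :=
  Finset.univ.filter fun x => hamDist n (g (s x)) x ≤ d

/-- The probability of error `ℰ_d(g,s) = ℙ(X ∉ 𝒟_d(g,s))`. -/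
def errProb {q : ℕ} (P : Fin q → ℝ) (n : ℕ) (d : ℝ)
    (g s : (Fin n → Fin q) → (Fin n → Fin q)) : ℝ :=
  ∑ x ∈ Finset.univ \ recSet n d g s, seqProb P n x

/-- The worst-case best responses `𝒮_d(g)`: best responses maximizing the error. -/
def WorstBR {q : ℕ} (U : Fin q → Fin q → ℝ) (P : Fin q → ℝ) (n : ℕ) (d : ℝ)
    (g : (Fin n → Fin q) → (Fin n → Fin q)) :
    Set ((Fin n → Fin q) → (Fin n → Fin q)) :=
  {s | s ∈ BestResponse U n g ∧
      ∀ s' ∈ BestResponse U n g, errProb P n d g s' ≤ errProb P n d g s}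

/-- The set `𝒜_d^n(g,s)` of reconstructions used for correct recovery. -/
def reconSet {q : ℕ} (n : ℕ) (d : ℝ) (g s : (Fin n → Fin q) → (Fin n → Fin q)) :
    Finset (Fin n → Fin q) :=
  (recSet n d g s).image fun x => g (s x)

/-- The rate of communication `R_d(g,s) = (1/n) log₂ |𝒜_d^n(g,s)|`. -/
def rateOf {q : ℕ} (n : ℕ) (d : ℝ) (g s : (Fin n → Fin q) → (Fin n → Fin q)) : ℝ :=
  Real.logb 2 ((reconSet n d g s).card) / n

/-- `R` is an achievable rate at distortion level `d`. -/
def AchievableRate {q : ℕ} (U : Fin q → Fin q → ℝ) (P : Fin q → ℝ) (d R : ℝ) : Prop :=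
  ∃ (g s : (n : ℕ) → (Fin n → Fin q) → (Fin n → Fin q)) (ε δ : ℕ → ℝ),
    (∀ n, 0 ≤ ε n) ∧ (∀ n, 0 ≤ δ n) ∧
    Tendsto ε atTop (nhds 0) ∧ Tendsto δ atTop (nhds 0) ∧
    (∀ n, 1 ≤ n → s n ∈ WorstBR U P n (d + δ n) (g n)) ∧
    (∀ n, 1 ≤ n → errProb P n (d + δ n) (g n) (s n) < ε n) ∧
    Tendsto (fun n => rateOf n (d + δ n) (g n) (s n)) atTop (nhds R)

/-- The rate region `ℛ_d`. -/
def RateRegion {q : ℕ} (U : Fin q → Fin q → ℝ) (P : Fin q → ℝ) (d : ℝ) : Set ℝ :=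
  {R | AchievableRate U P d R}

/-- The binary entropy function (with `H(0) = H(1) = 0`). -/
def binEnt (t : ℝ) : ℝ :=
  -(t * Real.logb 2 t) - (1 - t) * Real.logb 2 (1 - t)

/-- Shannon entropy (base 2) of a pmf on `Fin q`. -/
def entropy {q : ℕ} (P : Fin q → ℝ) : ℝ :=
  -∑ i, P i * Real.logb 2 (P i)

/-- `Γ(𝒰)`: the maximum of `∑ⱼ 𝒰(π(j),j)` over non-identity permutations `π`. -/
def Gamma {q : ℕ} (U : Fin q → Fin q → ℝ) : ℝ :=
  sSup {v | ∃ π : Equiv.Perm (Fin q), π ≠ 1 ∧ v = ∑ j, U (π j) j}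

/-- Mutual information `I(X;Y)` for source `P` and channel `W` (zero joint terms contribute 0). -/
def mutualInfo {q : ℕ} (P : Fin q → ℝ) (W : Fin q → Fin q → ℝ) : ℝ :=
  ∑ x, ∑ y, P x * W x y *
    Real.logb 2 (P x * W x y / (P x * ∑ x', P x' * W x' y))

/-- The rate-distortion function under Hamming distortion. -/
def RD {q : ℕ} (P : Fin q → ℝ) (d : ℝ) : ℝ :=
  sInf {I | ∃ W : Fin q → Fin q → ℝ,
    (∀ x y, 0 ≤ W x y) ∧ (∀ x, ∑ y, W x y = 1) ∧
    (∑ x, ∑ y, P x * W x y * (if x = y then (0 : ℝ) else 1)) ≤ d ∧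
    I = mutualInfo P W}

/-- Number of occurrences of the symbol `i` in the sequence `x` (its type, unnormalized). -/
def typeCount {q : ℕ} (n : ℕ) (x : Fin n → Fin q) (i : Fin q) : ℕ :=
  (Finset.univ.filter fun k => x k = i).card

/-- The type class of a sequence: all sequences with the same empirical type. -/
def typeClass {q : ℕ} (n : ℕ) (x : Fin n → Fin q) : Finset (Fin n → Fin q) :=
  Finset.univ.filter fun y => ∀ i, typeCount n y i = typeCount n x i

/-- Adjacency in the sender graph `G_s^n`. -/
def senderAdj {q : ℕ} (U : Fin q → Fin q → ℝ) (n : ℕ) (x y : Fin n → Fin q) : Prop :=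
  x ≠ y ∧ (0 ≤ blockUtil U n y x ∨ 0 ≤ blockUtil U n x y)

lemma blockUtil_comp {q n : ℕ} (U : Fin q → Fin q → ℝ) (σ : Equiv.Perm (Fin n))
    (x y : Fin n → Fin q) : blockUtil U n (x ∘ σ) (y ∘ σ) = blockUtil U n x y := by
  unfold blockUtil
  congr 1
  exact Equiv.sum_comp σ fun i => U (x i) (y i)

lemma senderAdj_comp {q n : ℕ} (U : Fin q → Fin q → ℝ) (σ : Equiv.Perm (Fin n))
    (x y : Fin n → Fin q) : senderAdj U n (x ∘ σ) (y ∘ σ) ↔ senderAdj U n x y := by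
  simp only [senderAdj, blockUtil_comp, ne_eq, σ.surjective.injective_comp_right.eq_iff]

lemma senderAdj_symm {q n : ℕ} (U : Fin q → Fin q → ℝ) (x y : Fin n → Fin q) :
    senderAdj U n x y ↔ senderAdj U n y x := by
  unfold senderAdj
  rw [ne_comm, or_comm]

lemma typeCount_comp {q n : ℕ} (σ : Equiv.Perm (Fin n)) (x : Fin n → Fin q) (i : Fin q) :
    typeCount n (x ∘ σ) i = typeCount n x i := by
  unfold typeCount
  exact Finset.card_equiv σ (by simp)

lemma self_mem_typeClass {q n : ℕ} (x : Fin n → Fin q) : x ∈ typeClass n x := by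
  simp [typeClass]

/-- Permutations of the coordinates act transitively on each type class: choose a bijection
between the fibres of `x` and `x'` over each symbol and glue them. -/
lemma exists_perm_of_typeCount_eq {q n : ℕ} (x x' : Fin n → Fin q)
    (h : ∀ i, typeCount n x i = typeCount n x' i) :
    ∃ σ : Equiv.Perm (Fin n), x' ∘ σ = x := by
  have e : ∀ c, Nonempty ({k // x k = c} ≃ {k // x' k = c}) := fun c => by
    refine ⟨Fintype.equivOfCardEq ?_⟩
    rw [Fintype.card_subtype, Fintype.card_subtype]
    exact h c
  exact ⟨Equiv.ofFiberEquiv fun c => (e c).some, funext fun k => Equiv.ofFiberEquiv_map _ k⟩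

lemma card_nbrs_eq {q n : ℕ} (U : Fin q → Fin q → ℝ) (x₀ y₀ x x' : Fin n → Fin q)
    (hx : x ∈ typeClass n x₀) (hx' : x' ∈ typeClass n x₀) :
    ((typeClass n y₀).filter fun y => senderAdj U n x y).card =
      ((typeClass n y₀).filter fun y => senderAdj U n x' y).card := by
  simp only [typeClass, mem_filter, mem_univ, true_and] at hx hx'
  obtain ⟨σ, rfl⟩ := exists_perm_of_typeCount_eq x' x fun i => (hx' i).trans (hx i).symm
  refine Finset.card_equiv (σ.symm.arrowCongr (Equiv.refl _)) fun y => ?_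
  have hy : σ.symm.arrowCongr (Equiv.refl _) y = y ∘ σ := rfl
  rw [hy]
  simp only [typeClass, mem_filter, mem_univ, true_and, typeCount_comp, senderAdj_comp]

/-- bi-regularity of the sender graph between two type classes:
(i) every sequence of a type class has the same number of neighbours in the other
type class; (ii) the counting identity between the two type classes. -/
theorem sender_graph_biregular
    (q : ℕ) (hq : 2 ≤ q)
    (U : Fin q → Fin q → ℝ) (hUdiag : ∀ i, U i i = 0)
    (n : ℕ) (hn : 1 ≤ n)
    (x₀ y₀ : Fin n → Fin q) :
    (∀ x ∈ typeClass n x₀, ∀ x' ∈ typeClass n x₀,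
      ((typeClass n y₀).filter fun y => senderAdj U n x y).card =
        ((typeClass n y₀).filter fun y => senderAdj U n x' y).card) ∧
    (((typeClass n y₀).filter fun y => senderAdj U n x₀ y).card * (typeClass n x₀).card =
      ((typeClass n x₀).filter fun x => senderAdj U n y₀ x).card * (typeClass n y₀).card) := by
  refine ⟨fun x hx x' hx' => card_nbrs_eq U x₀ y₀ x x' hx hx', ?_⟩
  rw [mul_comm, mul_comm _ (typeClass n y₀).card]
  refine Finset.card_mul_eq_card_mul (senderAdj U n) (fun x hx => ?_) (fun y hy => ?_)
  · exact card_nbrs_eq U x₀ y₀ x x₀ hx (self_mem_typeClass x₀)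
  · rw [← card_nbrs_eq U y₀ x₀ y y₀ hy (self_mem_typeClass y₀)]
    simp only [Finset.bipartiteBelow, senderAdj_symm U _ y]
end
end

section
/- Suppose Γ(𝒰) < 0. Then for every probability mass function P on 𝒳 × 𝒳 whose two marginals coincide (i.e., ∑_j P(i,j) = ∑_j P(j,i) for all i ∈ 𝒳), one has ∑_{i,j} P(i,j) 𝒰(i,j) ≤ 0. Moreover, ∑_{i,j} P(i,j) 𝒰(i,j) = 0 if and only if P(i,j) = 0 for all i ≠ j (equivalently, P(i,i) equals the common marginal value at i for every i ∈ 𝒳). -/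
/-!
Adding mass to the diagonal of `P` until every row sums to one changes neither the off-diagonal
entries nor the expected utility, because `U` vanishes on the diagonal. As the two marginals of `P`
agree, the columns then also sum to one, so the completed matrix is doubly stochastic and, by
Birkhoff's theorem, equals `∑ σ, w σ • σ.permMatrix ℝ` with nonnegative weights `w`. The expected
utility is therefore `∑ σ, w σ * ∑ i, U i (σ i)`. The identity contributes `0`, and every other
permutation has strictly negative utility because `Γ(U) < 0`, so the sum is nonpositive. If it
vanishes, only the identity carries weight and `P` has no off-diagonal mass.
-/

open Finset Filter
open scoped Classical

noncomputable section

/-- The set whose supremum defines `Gamma U` is finite, so that supremum is an upper bound.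
Replacing `σ` by its inverse turns the sum over `U (π j) j` into one over `U i (σ i)`. -/
lemma perm_utility_le_Gamma {q : ℕ} (U : Fin q → Fin q → ℝ) {σ : Equiv.Perm (Fin q)}
    (hσ : σ ≠ 1) : ∑ i, U i (σ i) ≤ Gamma U := by
  have hfin : {v | ∃ π : Equiv.Perm (Fin q), π ≠ 1 ∧ v = ∑ j, U (π j) j}.Finite :=
    (Set.finite_range fun π : Equiv.Perm (Fin q) => ∑ j, U (π j) j).subset
      (by rintro _ ⟨π, -, rfl⟩; exact ⟨π, rfl⟩)
  refine le_csSup hfin.bddAbove ⟨σ⁻¹, inv_ne_one.mpr hσ, ?_⟩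
  rw [← Equiv.sum_comp σ fun j => U (σ⁻¹ j) j]
  simp

/-- Birkhoff's theorem applied to `P` with its diagonal completed so that all rows and columns sum
to one: off the diagonal, `P` is a nonnegative combination of permutation matrices. -/
lemma exists_perm_weights {q : ℕ} (P : Fin q → Fin q → ℝ) (hPnn : ∀ i j, 0 ≤ P i j)
    (hPsum : ∑ i, ∑ j, P i j = 1) (hmarg : ∀ i, ∑ j, P i j = ∑ j, P j i) :
    ∃ w : Equiv.Perm (Fin q) → ℝ, (∀ σ, 0 ≤ w σ) ∧
      ∀ i j, i ≠ j → P i j = ∑ σ, w σ * if σ i = j then 1 else 0 := by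
  have hle : ∀ i, ∑ j, P i j ≤ 1 := fun i => hPsum ▸
    Finset.single_le_sum (f := fun i => ∑ j, P i j)
      (fun i _ => Finset.sum_nonneg fun j _ => hPnn i j) (Finset.mem_univ i)
  let M : Matrix (Fin q) (Fin q) ℝ := fun i j => P i j + if i = j then 1 - ∑ k, P i k else 0
  have hM : M ∈ doublyStochastic ℝ (Fin q) := by
    rw [mem_doublyStochastic_iff_sum]
    refine ⟨fun i j => ?_, fun i => ?_, fun j => ?_⟩
    · refine add_nonneg (hPnn i j) ?_
      split_ifs
      · exact sub_nonneg.mpr (hle i)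
      · exact le_rfl
    · simp [M, Finset.sum_add_distrib]
    · simp [M, Finset.sum_add_distrib, hmarg j]
  obtain ⟨w, hw, -, hwM⟩ := exists_eq_sum_perm_of_mem_doublyStochastic hM
  refine ⟨w, hw, fun i j hij => ?_⟩
  have h := congrFun (congrFun hwM i) j
  simpa [M, hij, Matrix.sum_apply, Equiv.Perm.permMatrix, PEquiv.toMatrix_apply,
    Equiv.toPEquiv_apply, eq_comm] using h.symm

/-- if `Γ(𝒰) < 0`, then every joint pmf on `𝒳 × 𝒳` with equal
marginals has nonpositive expected utility, with equality iff it is supported on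
the diagonal. -/
theorem expected_utility_nonpos_of_equal_marginals
    (q : ℕ) (hq : 2 ≤ q)
    (U : Fin q → Fin q → ℝ) (hUdiag : ∀ i, U i i = 0)
    (hG : Gamma U < 0)
    (P : Fin q → Fin q → ℝ) (hPnn : ∀ i j, 0 ≤ P i j)
    (hPsum : ∑ i, ∑ j, P i j = 1)
    (hmarg : ∀ i, ∑ j, P i j = ∑ j, P j i) :
    (∑ i, ∑ j, P i j * U i j) ≤ 0 ∧
    ((∑ i, ∑ j, P i j * U i j) = 0 ↔ ∀ i j : Fin q, i ≠ j → P i j = 0) := by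
  obtain ⟨w, hw, hwP⟩ := exists_perm_weights P hPnn hPsum hmarg
  have hval : ∑ i, ∑ j, P i j * U i j = ∑ σ, w σ * ∑ i, U i (σ i) := by
    calc ∑ i, ∑ j, P i j * U i j
        = ∑ i, ∑ j, ∑ σ, w σ * (if σ i = j then U i j else 0) := by
          refine Finset.sum_congr rfl fun i _ => Finset.sum_congr rfl fun j _ => ?_
          rcases eq_or_ne i j with rfl | hij
          · simp [hUdiag]
          · rw [hwP i j hij, Finset.sum_mul]
            exact Finset.sum_congr rfl fun σ _ => by split_ifs <;> ring
      _ = ∑ i, ∑ σ, w σ * U i (σ i) := by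
          refine Finset.sum_congr rfl fun i _ => ?_
          rw [Finset.sum_comm]
          simp
      _ = ∑ σ, w σ * ∑ i, U i (σ i) := by
          rw [Finset.sum_comm]
          simp only [Finset.mul_sum]
  have hneg : ∀ σ : Equiv.Perm (Fin q), σ ≠ 1 → ∑ i, U i (σ i) < 0 := fun σ hσ =>
    (perm_utility_le_Gamma U hσ).trans_lt hG
  have hterm : ∀ σ ∈ Finset.univ, w σ * ∑ i, U i (σ i) ≤ 0 := by
    intro σ _
    rcases eq_or_ne σ 1 with rfl | hσ
    · simp [hUdiag]
    · exact mul_nonpos_of_nonneg_of_nonpos (hw σ) (hneg σ hσ).le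
  refine ⟨hval ▸ Finset.sum_nonpos hterm, fun h0 i j hij => ?_, fun h => ?_⟩
  · rw [hval, Finset.sum_eq_zero_iff_of_nonpos hterm] at h0
    rw [hwP i j hij]
    refine Finset.sum_eq_zero fun σ hσ => ?_
    rcases eq_or_ne σ 1 with rfl | hσ1
    · simp [hij]
    · rw [(mul_eq_zero.mp (h0 σ hσ)).resolve_right (hneg σ hσ1).ne, zero_mul]
  · refine Finset.sum_eq_zero fun i _ => Finset.sum_eq_zero fun j _ => ?_
    rcases eq_or_ne i j with rfl | hij
    · rw [hUdiag, mul_zero]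
    · rw [h i j hij, zero_mul]
end
end
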